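/- Let k ≥ 3 and 1 ≤ j ≤ k−1 be integers, let s ≥ 0 be a fixed integer and c a real constant, and suppose p = (j·log n + s·log log n + c_n)/C(n,k−j) where c_n → c as n → ∞. Let D_s be the number of j-sets of degree exactly s in H^k(n,p). Then D_s converges in distribution to the Poisson distribution with mean j^s·e^{−c}/(j!·s!). -/

import Mathlib

open Filter Asymptotics

open scoped Classical

noncomputable section

/-- The collection of all `k`-element subsets of the vertex set `Fin n`,
    i.e. all potential edges of a `k`-uniform hypergraph on `n` vertices. -/
def kSets (n k : ℕ) : Finset (Finset (Fin n)) :=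
  Finset.powersetCard k (Finset.univ : Finset (Fin n))

/-- The probability that the binomial random `k`-uniform hypergraph `H^k(n,p)`
    (each `k`-set an edge independently with probability `p`) has property `Q`. -/
def binomProb (n k : ℕ) (p : ℝ) (Q : Finset (Finset (Fin n)) → Prop) : ℝ :=
  ∑ H ∈ (kSets n k).powerset,
    (if Q H then p ^ H.card * (1 - p) ^ ((kSets n k).card - H.card) else 0)

/-- The expectation of a real-valued random variable `X` of `H^k(n,p)`. -/
def binomExp (n k : ℕ) (p : ℝ) (X : Finset (Finset (Fin n)) → ℝ) : ℝ :=
  ∑ H ∈ (kSets n k).powerset,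
    p ^ H.card * (1 - p) ^ ((kSets n k).card - H.card) * X H

/-- The degree of a vertex set `J` in the hypergraph with edge set `H`:
    the number of edges containing `J`. -/
def setDegree {n : ℕ} (H : Finset (Finset (Fin n))) (J : Finset (Fin n)) : ℕ :=
  (H.filter (fun e => J ⊆ e)).card

/-- `J` is isolated in `H`: it is contained in no edge. -/
def IsIsolatedSet {n : ℕ} (H : Finset (Finset (Fin n))) (J : Finset (Fin n)) : Prop :=
  ∀ e ∈ H, ¬ J ⊆ e

/-- Two sets `J1`, `J2` are `j`-connected in the hypergraph with edge set `H`: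
    there is a walk of edges from one to the other in which consecutive edges
    intersect in at least `j` vertices. -/
def JConn {n : ℕ} (j : ℕ) (H : Finset (Finset (Fin n))) (J1 J2 : Finset (Fin n)) : Prop :=
  ∃ e1 ∈ H, ∃ e2 ∈ H, J1 ⊆ e1 ∧ J2 ⊆ e2 ∧
    Relation.ReflTransGen (fun e f => e ∈ H ∧ f ∈ H ∧ j ≤ (e ∩ f).card) e1 e2

/-- The hypergraph with edge set `H` is `j`-connected:
    all `j`-sets lie in a single `j`-component, i.e. are pairwise `j`-connected. -/
def JConnectedHG (n j : ℕ) (H : Finset (Finset (Fin n))) : Prop :=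
  ∀ J1 J2 : Finset (Fin n), J1.card = j → J2.card = j → JConn j H J1 J2

/-- `C` is a `j`-component of `H`: a maximal nonempty set of pairwise `j`-connected `j`-sets. -/
def IsJComponent (n j : ℕ) (H : Finset (Finset (Fin n))) (C : Finset (Finset (Fin n))) : Prop :=
  C.Nonempty ∧ (∀ J ∈ C, J.card = j) ∧ (∀ J1 ∈ C, ∀ J2 ∈ C, JConn j H J1 J2) ∧
    ∀ J : Finset (Fin n), J.card = j → (∃ J' ∈ C, JConn j H J J') → J ∈ C

/-- `D_s`: the number of `j`-sets of degree exactly `s`. -/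
def numDegSets (n j s : ℕ) (H : Finset (Finset (Fin n))) : ℕ :=
  ((Finset.powersetCard j (Finset.univ : Finset (Fin n))).filter
    (fun J => setDegree H J = s)).card

/-- The Poisson probability mass function with mean `lam`. -/
def poissonPMF (lam : ℝ) (i : ℕ) : ℝ := Real.exp (-lam) * lam ^ i / (Nat.factorial i)

/-- Total variation distance between the distribution of `D_s` in `H^k(n,p)`
    and the Poisson distribution with mean `lam`. -/
def dTVpoisson (n k j s : ℕ) (p lam : ℝ) : ℝ :=
  (1 / 2) * ∑' i : ℕ, |binomProb n k p (fun H => numDegSets n j s H = i) - poissonPMF lam i|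

/-- The probability that the uniform random hypergraph `H^k(n,M)` (chosen uniformly among
    all `k`-uniform hypergraphs on `Fin n` with exactly `M` edges) has property `Q`. -/
def uniformProb (n k M : ℕ) (Q : Finset (Finset (Fin n)) → Prop) : ℝ :=
  (((Finset.powersetCard M (kSets n k)).filter Q).card : ℝ) /
    ((Finset.powersetCard M (kSets n k)).card : ℝ)

/-!
By the Bonferroni inequalities, convergence of all factorial moments to those of a Poisson variable
implies convergence in distribution. So it suffices to show that the expected number of `r`-tuples
of distinct `j`-sets of degree `s`, counted up to order, tends to `λ ^ r / r!`, where
`λ = j ^ s * e ^ (-c) / (j! * s!)`.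

Fix `r` distinct `j`-sets. Each is contained in `N = C(n - j, k - j)` potential edges, and any two
share at most `M = C(n - j - 1, k - j - 1)` of them, so the potential edges containing at least two
of the `j`-sets number at most `r ^ 2 * M`. Once these are revealed, the `r` degrees are
independent. As the binomial distribution increases up to its mode, which is of order `log n`, the
probability that all `r` degrees equal `s` is largest when no revealed edge is present; as
`p * M → 0`, that case is also the typical one. Hence this probability is asymptotic to
`P(Bin(N, p) = s) ^ r`. Finally `p * N = j * log n + s * log log n + c + o(1)`, so the Poisson
approximation of the binomial distribution gives `C(n, j) * P(Bin(N, p) = s) → λ`.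
-/

section RandomSubset

open Finset

variable {α ι : Type*} {p : ℝ} {S : Finset α}

/-- The expectation of `f H`, where `H` is the binomial random subset of `S` that contains each
element independently with probability `p`. -/
def subsetExp (p : ℝ) (S : Finset α) (f : Finset α → ℝ) : ℝ :=
  ∑ H ∈ S.powerset, p ^ #H * (1 - p) ^ (#S - #H) * f H

lemma subsetExp_congr {f g : Finset α → ℝ} (h : ∀ H ⊆ S, f H = g H) :
    subsetExp p S f = subsetExp p S g :=
  sum_congr rfl fun H hH ↦ by rw [h H (mem_powerset.1 hH)]

lemma subsetExp_const (p : ℝ) (S : Finset α) (a : ℝ) : subsetExp p S (fun _ ↦ a) = a := by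
  rw [subsetExp, ← sum_mul, sum_pow_mul_eq_add_pow, add_sub_cancel, one_pow, one_mul]

lemma subsetExp_sum (p : ℝ) (S : Finset α) (T : Finset ι) (f : ι → Finset α → ℝ) :
    subsetExp p S (fun H ↦ ∑ i ∈ T, f i H) = ∑ i ∈ T, subsetExp p S (f i) := by
  simp only [subsetExp, mul_sum]
  exact sum_comm

lemma subsetExp_const_mul (p : ℝ) (S : Finset α) (a : ℝ) (f : Finset α → ℝ) :
    subsetExp p S (fun H ↦ a * f H) = a * subsetExp p S f := by
  simp only [subsetExp, mul_sum, mul_left_comm]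

lemma subsetExp_sub (p : ℝ) (S : Finset α) (f g : Finset α → ℝ) :
    subsetExp p S (fun H ↦ f H - g H) = subsetExp p S f - subsetExp p S g := by
  simp only [subsetExp, mul_sub, sum_sub_distrib]

lemma pow_mul_one_sub_pow_nonneg (hp : p ∈ Set.Icc 0 1) (a b : ℕ) : 0 ≤ p ^ a * (1 - p) ^ b :=
  mul_nonneg (pow_nonneg hp.1 a) (pow_nonneg (sub_nonneg.2 hp.2) b)

lemma subsetExp_mono (hp : p ∈ Set.Icc 0 1) {f g : Finset α → ℝ} (h : ∀ H, f H ≤ g H) :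
    subsetExp p S f ≤ subsetExp p S g :=
  sum_le_sum fun H _ ↦ mul_le_mul_of_nonneg_left (h H) (pow_mul_one_sub_pow_nonneg hp _ _)

lemma subsetExp_nonneg (hp : p ∈ Set.Icc 0 1) {f : Finset α → ℝ} (hf : ∀ H, 0 ≤ f H) :
    0 ≤ subsetExp p S f :=
  sum_nonneg fun H _ ↦ mul_nonneg (pow_mul_one_sub_pow_nonneg hp _ _) (hf H)

lemma abs_subsetExp_le (hp : p ∈ Set.Icc 0 1) (f : Finset α → ℝ) :
    |subsetExp p S f| ≤ subsetExp p S fun H ↦ |f H| := by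
  refine (abs_sum_le_sum_abs _ _).trans_eq (sum_congr rfl fun H _ ↦ ?_)
  rw [abs_mul, abs_of_nonneg (pow_mul_one_sub_pow_nonneg hp _ _)]

lemma pow_card_mul_apply_empty_le_subsetExp (hp : p ∈ Set.Icc 0 1) {f : Finset α → ℝ}
    (hf : ∀ H, 0 ≤ f H) : (1 - p) ^ #S * f ∅ ≤ subsetExp p S f := by
  simpa [subsetExp] using single_le_sum (f := fun H ↦ p ^ #H * (1 - p) ^ (#S - #H) * f H)
    (fun H _ ↦ mul_nonneg (pow_mul_one_sub_pow_nonneg hp _ _) (hf H)) (empty_mem_powerset S)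

section Independence

variable [DecidableEq α]

lemma subsetExp_union {A B : Finset α} (hAB : Disjoint A B) (f : Finset α → ℝ) :
    subsetExp p (A ∪ B) f = subsetExp p A fun a ↦ subsetExp p B fun b ↦ f (a ∪ b) := by
  simp only [subsetExp, mul_sum]
  rw [← sum_product']
  symm
  refine sum_nbij' (fun x ↦ x.1 ∪ x.2) (fun H ↦ (H ∩ A, H ∩ B)) ?_ ?_ ?_ ?_ ?_
  · rintro ⟨a, b⟩ h
    simp only [mem_product, mem_powerset] at h ⊢
    exact union_subset_union h.1 h.2
  · intro H _
    simp only [mem_product, mem_powerset]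
    exact ⟨inter_subset_right, inter_subset_right⟩
  · rintro ⟨a, b⟩ h
    simp only [mem_product, mem_powerset] at h
    rw [disjoint_left] at hAB
    ext x <;> grind
  · intro H hH
    simp only [mem_powerset] at hH
    rw [← inter_union_distrib_left, inter_eq_left.2 hH]
  · rintro ⟨a, b⟩ h
    simp only [mem_product, mem_powerset] at h
    have hexp : #A + #B - (#a + #b) = (#A - #a) + (#B - #b) := by
      have := card_le_card h.1
      have := card_le_card h.2
      omega
    rw [card_union_of_disjoint (hAB.mono h.1 h.2), card_union_of_disjoint hAB, hexp]
    ring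

lemma subsetExp_mul_of_subset {A : Finset α} (hA : A ⊆ S) (f g : Finset α → ℝ) :
    subsetExp p S (fun H ↦ f (H ∩ A) * g (H \ A)) = subsetExp p A f * subsetExp p (S \ A) g := by
  rw [← union_sdiff_of_subset hA, subsetExp_union disjoint_sdiff, union_sdiff_of_subset hA,
    mul_comm, ← subsetExp_const_mul]
  refine subsetExp_congr fun a ha ↦ ?_
  rw [mul_comm, ← subsetExp_const_mul]
  refine subsetExp_congr fun b hb ↦ ?_
  have hbA : Disjoint b A := sdiff_disjoint.mono_left hb
  rw [union_inter_distrib_right, inter_eq_left.2 ha, disjoint_iff_inter_eq_empty.1 hbA,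
    union_empty, union_sdiff_distrib, sdiff_eq_empty_iff_subset.2 ha, empty_union,
    sdiff_eq_self_of_disjoint hbA]

lemma subsetExp_prod_of_pairwiseDisjoint (I : Finset ι) (A : ι → Finset α)
    (f : ι → Finset α → ℝ) (hA : ∀ i ∈ I, A i ⊆ S) (hdisj : (I : Set ι).PairwiseDisjoint A) :
    subsetExp p S (fun H ↦ ∏ i ∈ I, f i (H ∩ A i)) = ∏ i ∈ I, subsetExp p (A i) (f i) := by
  induction I using Finset.induction_on generalizing S with
  | empty => simpa using subsetExp_const p S 1
  | insert i I hi ih =>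
    have hdisj' : ∀ l ∈ I, Disjoint (A l) (A i) := fun l hl ↦
      hdisj (mem_insert_of_mem hl) (mem_insert_self i I) (ne_of_mem_of_not_mem hl hi)
    rw [prod_insert hi, ← ih (S := S \ A i)
      (fun l hl ↦ subset_sdiff.2 ⟨hA l (mem_insert_of_mem hl), hdisj' l hl⟩)
      (hdisj.subset (coe_subset.2 (subset_insert i I))),
      ← subsetExp_mul_of_subset (hA i (mem_insert_self i I))]
    refine subsetExp_congr fun H _ ↦ ?_
    rw [prod_insert hi]
    congr 1
    refine prod_congr rfl fun l hl ↦ ?_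
    rw [sdiff_inter_right_comm,
      sdiff_eq_self_of_disjoint ((hdisj' l hl).mono_left inter_subset_right)]

/-- Off the set `O`, the events `#(H ∩ E i) = s` only depend on the disjoint parts `E i \ O`. -/
lemma subsetExp_prod_card_inter_eq (I : Finset ι) (E : ι → Finset α)
    {O : Finset α} (s : ℕ) (hE : ∀ i ∈ I, E i ⊆ S) (hO : O ⊆ S)
    (hEO : ∀ i ∈ I, ∀ l ∈ I, i ≠ l → E i ∩ E l ⊆ O) :
    subsetExp p S (fun H ↦ ∏ i ∈ I, if #(H ∩ E i) = s then 1 else 0) =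
      subsetExp p O fun o ↦ ∏ i ∈ I,
        subsetExp p (E i \ O) fun b ↦ if #b + #(o ∩ E i) = s then 1 else 0 := by
  rw [← union_sdiff_of_subset hO, subsetExp_union disjoint_sdiff]
  refine subsetExp_congr fun o ho ↦ ?_
  rw [← subsetExp_prod_of_pairwiseDisjoint (S := S \ O) I (fun i ↦ E i \ O)]
  · refine subsetExp_congr fun b hb ↦ prod_congr rfl fun i _ ↦ ?_
    have hsplit : (o ∪ b) ∩ E i = b ∩ (E i \ O) ∪ o ∩ E i := by
      have : ∀ x ∈ b, x ∉ O := fun x hx ↦ (mem_sdiff.1 (hb hx)).2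
      grind
    have hdisj : Disjoint (b ∩ (E i \ O)) (o ∩ E i) :=
      disjoint_sdiff.symm.mono inter_subset_right (inter_subset_left.trans ho)
    rw [hsplit, card_union_of_disjoint hdisj]
  · exact fun i hi ↦ sdiff_subset_sdiff (hE i hi) Subset.rfl
  · intro i hi l hl hil
    have := hEO i hi l hl hil
    exact disjoint_left.2 fun x hx hx' ↦ by grind

end Independence

end RandomSubset

section BinomialPMF

open Finset

variable {α : Type*} {p : ℝ}

/-- The binomial probability mass function: the probability that a sum of `N` independent
Bernoulli variables of mean `p` equals `t`. -/
def binomialPMF (N : ℕ) (p : ℝ) (t : ℕ) : ℝ := N.choose t * p ^ t * (1 - p) ^ (N - t)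

lemma binomialPMF_nonneg (hp : p ∈ Set.Icc 0 1) (N t : ℕ) : 0 ≤ binomialPMF N p t := by
  rw [binomialPMF, mul_assoc]
  exact mul_nonneg (Nat.cast_nonneg _) (pow_mul_one_sub_pow_nonneg hp _ _)

lemma subsetExp_card_eq (p : ℝ) (S : Finset α) (t : ℕ) :
    subsetExp p S (fun H ↦ if #H = t then 1 else 0) = binomialPMF #S p t := by
  simp only [subsetExp, binomialPMF, mul_ite, mul_one, mul_zero]
  rw [← sum_filter, ← powersetCard_eq_filter,
    sum_congr rfl fun H hH ↦ by rw [(mem_powersetCard.1 hH).2], sum_const, card_powersetCard,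
    nsmul_eq_mul, mul_assoc]

lemma binomialPMF_succ_mul (N t : ℕ) (p : ℝ) :
    binomialPMF N p (t + 1) * ((t + 1) * (1 - p)) = binomialPMF N p t * (p * (N - t)) := by
  rcases le_or_gt N t with hNt | htN
  · rcases hNt.eq_or_lt with rfl | hlt
    · simp [binomialPMF]
    · simp [binomialPMF, Nat.choose_eq_zero_of_lt hlt,
        Nat.choose_eq_zero_of_lt (hlt.trans t.lt_succ_self)]
  · have hchoose : (N.choose (t + 1) : ℝ) * (t + 1) = N.choose t * (N - t) := by
      rw [← Nat.cast_sub htN.le]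
      exact_mod_cast Nat.choose_succ_right_eq N t
    obtain ⟨d, rfl⟩ := Nat.exists_eq_add_of_lt htN
    rw [binomialPMF, binomialPMF, show t + d + 1 - (t + 1) = d by omega,
      show t + d + 1 - t = d + 1 by omega, pow_succ, pow_succ]
    linear_combination p ^ t * p * (1 - p) ^ d * (1 - p) * hchoose

lemma binomialPMF_le_succ (hp : p ∈ Set.Ico 0 1) {N t : ℕ} (ht : (t + 1 : ℝ) ≤ p * (N + 1)) :
    binomialPMF N p t ≤ binomialPMF N p (t + 1) := by
  have hq : 0 < 1 - p := sub_pos.2 hp.2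
  have hpos : 0 < (t + 1 : ℝ) * (1 - p) := by positivity
  refine le_of_mul_le_mul_right ?_ hpos
  rw [binomialPMF_succ_mul]
  exact mul_le_mul_of_nonneg_left (by linarith)
    (binomialPMF_nonneg (Set.Ico_subset_Icc_self hp) N t)

/-- The binomial distribution increases up to its mode `⌊p * (N + 1)⌋`. -/
lemma binomialPMF_le_of_le (hp : p ∈ Set.Ico 0 1) {N s t : ℕ} (hs : (s : ℝ) ≤ p * (N + 1))
    (hts : t ≤ s) : binomialPMF N p t ≤ binomialPMF N p s := by
  induction s, hts using Nat.le_induction with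
  | base => rfl
  | succ s _ ih =>
    push_cast at hs
    exact (ih (by linarith)).trans (binomialPMF_le_succ hp hs)

lemma binomialPMF_mul_pow_le (hp : p ∈ Set.Icc 0 1) {N N' L : ℕ} (hN : N' ≤ N) (hL : N ≤ N' + L)
    (s : ℕ) : binomialPMF N' p s * (1 - p) ^ L ≤ binomialPMF N p s := by
  have hq : 0 ≤ 1 - p := sub_nonneg.2 hp.2
  have hpow : (1 - p) ^ (N' - s) * (1 - p) ^ L ≤ (1 - p) ^ (N - s) := by
    rw [← pow_add]
    exact pow_le_pow_of_le_one hq (sub_le_self 1 hp.1) (by omega)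
  rw [binomialPMF, binomialPMF, mul_assoc]
  have := hp.1
  gcongr

lemma choose_div_choose_mul_binomialPMF_le (hp : p ∈ Set.Icc 0 1) {N N' L : ℕ} (hN : N' ≤ N)
    (hL : N ≤ N' + L) (s : ℕ) :
    (N - L).choose s / N.choose s * binomialPMF N p s ≤ binomialPMF N' p s := by
  have hchoose : ((N - L).choose s / N.choose s * N.choose s : ℝ) ≤ N'.choose s :=
    (mul_le_of_le_div₀ (by positivity) (by positivity) le_rfl).trans
      (Nat.cast_le.2 (Nat.choose_le_choose s (by omega)))
  have hpow : (1 - p) ^ (N - s) ≤ (1 - p) ^ (N' - s) :=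
    pow_le_pow_of_le_one (sub_nonneg.2 hp.2) (sub_le_self 1 hp.1) (by omega)
  rw [binomialPMF, binomialPMF, ← mul_assoc, ← mul_assoc]
  have := hp.1
  have : 0 ≤ 1 - p := sub_nonneg.2 hp.2
  gcongr

lemma subsetExp_card_add_eq_le (hp : p ∈ Set.Ico 0 1) {S : Finset α} {s : ℕ} (c : ℕ)
    (hs : (s : ℝ) ≤ p * (#S + 1)) :
    subsetExp p S (fun H ↦ if #H + c = s then 1 else 0) ≤ binomialPMF #S p s := by
  by_cases hc : c ≤ s
  · calc subsetExp p S (fun H ↦ if #H + c = s then 1 else 0)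
        = binomialPMF #S p (s - c) := by
          rw [← subsetExp_card_eq]
          exact subsetExp_congr fun H _ ↦ by simp only [show #H + c = s ↔ #H = s - c by omega]
      _ ≤ binomialPMF #S p s := binomialPMF_le_of_le hp hs (Nat.sub_le s c)
  · calc subsetExp p S (fun H ↦ if #H + c = s then 1 else 0)
        = 0 := by
          refine (subsetExp_congr fun H _ ↦ ?_).trans (subsetExp_const p S 0)
          exact if_neg (by omega)
      _ ≤ binomialPMF #S p s := binomialPMF_nonneg (Set.Ico_subset_Icc_self hp) _ _

end BinomialPMF

section NearlyDisjointFamily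

open Finset

variable {α ι : Type*}

lemma choose_card_filter_eq_sum_prod (A : Finset ι) (Q : ι → Prop) [DecidablePred Q] (r : ℕ) :
    ((#{i ∈ A | Q i}).choose r : ℝ) =
      ∑ I ∈ A.powersetCard r, ∏ i ∈ I, if Q i then 1 else 0 := by
  simp only [prod_ite_zero, prod_const_one]
  rw [sum_boole, ← card_powersetCard]
  congr 2
  ext I
  simp only [mem_powersetCard, mem_filter, subset_iff]
  grind

variable [DecidableEq α] {p : ℝ} {S : Finset α} {A I : Finset ι} {E : ι → Finset α} {N M : ℕ}

/-- `(E i)_{i ∈ A}` is a family of `N`-element subsets of `S`, any two of which share at most `M`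
elements. For `j`-sets `J` of vertices, the sets `E J` of potential edges containing `J` form such
a family, with `M` the maximal codegree. -/
structure IsNearlyDisjointFamily (S : Finset α) (A : Finset ι) (E : ι → Finset α) (N M : ℕ) :
    Prop where
  subset : ∀ i ∈ A, E i ⊆ S
  card_eq : ∀ i ∈ A, #(E i) = N
  card_inter_le : ∀ i ∈ A, ∀ l ∈ A, i ≠ l → #(E i ∩ E l) ≤ M

/-- The number of members of the family `(E i)_{i ∈ A}` that contain exactly `s` elements of `H`. -/
def numMeeting (A : Finset ι) (E : ι → Finset α) (s : ℕ) (H : Finset α) : ℕ :=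
  #{i ∈ A | #(H ∩ E i) = s}

/-- The elements lying in at least two members of the family `(E i)_{i ∈ I}`. -/
def overlap (I : Finset ι) (E : ι → Finset α) : Finset α :=
  I.offDiag.biUnion fun x ↦ E x.1 ∩ E x.2

lemma subsetExp_choose_numMeeting (p : ℝ) (S : Finset α) (A : Finset ι) (E : ι → Finset α)
    (s r : ℕ) :
    subsetExp p S (fun H ↦ ((numMeeting A E s H).choose r : ℝ)) =
      ∑ I ∈ A.powersetCard r, subsetExp p S fun H ↦ ∏ i ∈ I, if #(H ∩ E i) = s then 1 else 0 := by
  rw [← subsetExp_sum]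
  exact subsetExp_congr fun H _ ↦ choose_card_filter_eq_sum_prod A (fun i ↦ #(H ∩ E i) = s) r

namespace IsNearlyDisjointFamily

lemma mono (h : IsNearlyDisjointFamily S A E N M) (hIA : I ⊆ A) :
    IsNearlyDisjointFamily S I E N M where
  subset i hi := h.subset i (hIA hi)
  card_eq i hi := h.card_eq i (hIA hi)
  card_inter_le i hi l hl := h.card_inter_le i (hIA hi) l (hIA hl)

lemma overlap_subset (h : IsNearlyDisjointFamily S I E N M) : overlap I E ⊆ S :=
  biUnion_subset.2 fun x hx ↦ inter_subset_left.trans (h.subset x.1 (mem_offDiag.1 hx).1)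

lemma card_overlap_le (h : IsNearlyDisjointFamily S I E N M) : #(overlap I E) ≤ #I ^ 2 * M := by
  refine (card_biUnion_le_card_mul _ _ M fun x hx ↦ ?_).trans (Nat.mul_le_mul_right M ?_)
  · obtain ⟨hx₁, hx₂, hne⟩ := mem_offDiag.1 hx
    exact h.card_inter_le x.1 hx₁ x.2 hx₂ hne
  · rw [offDiag_card, sq]
    exact Nat.sub_le _ _

lemma card_sdiff_overlap_le (h : IsNearlyDisjointFamily S I E N M) {i : ι} (hi : i ∈ I) :
    #(E i \ overlap I E) ≤ N :=
  (card_le_card sdiff_subset).trans_eq (h.card_eq i hi)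

lemma le_card_sdiff_overlap_add (h : IsNearlyDisjointFamily S I E N M) {i : ι} (hi : i ∈ I) :
    N ≤ #(E i \ overlap I E) + #I ^ 2 * M := by
  have := card_sdiff_add_card_inter (E i) (overlap I E)
  have := card_le_card (inter_subset_right : E i ∩ overlap I E ⊆ overlap I E)
  have := h.card_overlap_le
  have := h.card_eq i hi
  omega

lemma subsetExp_prod_eq (h : IsNearlyDisjointFamily S I E N M) (p : ℝ) (s : ℕ) :
    subsetExp p S (fun H ↦ ∏ i ∈ I, if #(H ∩ E i) = s then 1 else 0) =
      subsetExp p (overlap I E) fun o ↦ ∏ i ∈ I,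
        subsetExp p (E i \ overlap I E) fun b ↦ if #b + #(o ∩ E i) = s then 1 else 0 :=
  subsetExp_prod_card_inter_eq I E s h.subset h.overlap_subset fun i hi l hl hil ↦
    subset_biUnion_of_mem (s := I.offDiag) (x := (i, l)) (fun x : ι × ι ↦ E x.1 ∩ E x.2)
      (mem_offDiag.2 ⟨hi, hl, hil⟩)

/-- Keep only the outcomes in which the overlap of the family contains no element of `H`. -/
lemma le_subsetExp_prod (h : IsNearlyDisjointFamily S I E N M) (hp : p ∈ Set.Icc 0 1) (s : ℕ) :
    (1 - p) ^ (#I ^ 2 * M) *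
        ((N - #I ^ 2 * M).choose s / N.choose s * binomialPMF N p s) ^ #I ≤
      subsetExp p S fun H ↦ ∏ i ∈ I, if #(H ∩ E i) = s then 1 else 0 := by
  rw [h.subsetExp_prod_eq]
  refine le_trans ?_ (pow_card_mul_apply_empty_le_subsetExp hp fun o ↦ prod_nonneg fun i _ ↦
    subsetExp_nonneg hp fun b ↦ by positivity)
  have hq : 0 ≤ 1 - p := sub_nonneg.2 hp.2
  simp only [empty_inter, card_empty, add_zero, subsetExp_card_eq]
  rw [← prod_const]
  refine mul_le_mul (pow_le_pow_of_le_one hq (sub_le_self 1 hp.1) h.card_overlap_le)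
    (prod_le_prod (fun i _ ↦ ?_) fun i hi ↦ choose_div_choose_mul_binomialPMF_le hp
      (h.card_sdiff_overlap_le hi) (h.le_card_sdiff_overlap_add hi) s)
    (prod_nonneg fun i _ ↦ ?_) (pow_nonneg hq _)
  all_goals have := binomialPMF_nonneg hp N s; positivity

/-- Whatever part of `H` lies in the overlap of the family, below the mode each conditional
probability is largest if that part is empty. -/
lemma subsetExp_prod_le (h : IsNearlyDisjointFamily S I E N M) (hp : p ∈ Set.Ico 0 1) {s : ℕ}
    (hs : (s : ℝ) ≤ p * (N - #I ^ 2 * M)) :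
    subsetExp p S (fun H ↦ ∏ i ∈ I, if #(H ∩ E i) = s then 1 else 0) ≤
      (binomialPMF N p s / (1 - p) ^ (#I ^ 2 * M)) ^ #I := by
  have hp' : p ∈ Set.Icc 0 1 := Set.Ico_subset_Icc_self hp
  rw [h.subsetExp_prod_eq, ← subsetExp_const p (overlap I E) ((_ : ℝ) ^ #I)]
  refine subsetExp_mono hp' fun o ↦ ?_
  rw [← prod_const]
  refine prod_le_prod (fun i _ ↦ subsetExp_nonneg hp' fun b ↦ by positivity) fun i hi ↦ ?_
  have hcard : (N : ℝ) - #I ^ 2 * M ≤ #(E i \ overlap I E) := by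
    rw [sub_le_iff_le_add]
    exact_mod_cast h.le_card_sdiff_overlap_add hi
  have hs' : (s : ℝ) ≤ p * (#(E i \ overlap I E) + 1) :=
    hs.trans (mul_le_mul_of_nonneg_left (by linarith) hp.1)
  refine (subsetExp_card_add_eq_le hp _ hs').trans ?_
  rw [le_div_iff₀ (pow_pos (sub_pos.2 hp.2) _)]
  exact binomialPMF_mul_pow_le hp' (h.card_sdiff_overlap_le hi) (h.le_card_sdiff_overlap_add hi) s

lemma le_subsetExp_choose (h : IsNearlyDisjointFamily S A E N M) (hp : p ∈ Set.Icc 0 1)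
    (s r : ℕ) :
    (#A).choose r * ((1 - p) ^ (r ^ 2 * M) *
        ((N - r ^ 2 * M).choose s / N.choose s * binomialPMF N p s) ^ r) ≤
      subsetExp p S fun H ↦ ((numMeeting A E s H).choose r : ℝ) := by
  rw [subsetExp_choose_numMeeting, ← card_powersetCard, ← nsmul_eq_mul]
  refine card_nsmul_le_sum _ _ _ fun I hI ↦ ?_
  obtain ⟨hIA, rfl⟩ := mem_powersetCard.1 hI
  exact (h.mono hIA).le_subsetExp_prod hp s

lemma subsetExp_choose_le (h : IsNearlyDisjointFamily S A E N M) (hp : p ∈ Set.Ico 0 1) {s r : ℕ}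
    (hs : (s : ℝ) ≤ p * (N - r ^ 2 * M)) :
    subsetExp p S (fun H ↦ ((numMeeting A E s H).choose r : ℝ)) ≤
      (#A).choose r * (binomialPMF N p s / (1 - p) ^ (r ^ 2 * M)) ^ r := by
  rw [subsetExp_choose_numMeeting, ← card_powersetCard, ← nsmul_eq_mul]
  refine sum_le_card_nsmul _ _ _ fun I hI ↦ ?_
  obtain ⟨hIA, rfl⟩ := mem_powersetCard.1 hI
  exact (h.mono hIA).subsetExp_prod_le hp hs

end IsNearlyDisjointFamily

end NearlyDisjointFamily

section FactorialMoments

open Finset Topology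

lemma abs_ite_sub_alternating_sum_choose_le (m T : ℕ) :
    |(if m = 0 then (1 : ℝ) else 0) - ∑ t ∈ range T, (-1) ^ t * (m.choose t : ℝ)| ≤
      m.choose T := by
  rcases T with _ | T
  · split_ifs <;> simp
  rcases m with _ | m
  · simp [sum_range_succ']
  have hsum : ∑ t ∈ range (T + 1), (-1) ^ t * ((m + 1).choose t : ℝ) = (-1) ^ T * m.choose T := by
    exact_mod_cast Int.alternating_sum_range_choose_eq_choose (n := m) (m := T)
  rw [hsum, if_neg m.succ_ne_zero, zero_sub, abs_neg, abs_mul, abs_neg_one_pow, one_mul,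
    Nat.abs_cast]
  exact_mod_cast (Nat.choose_succ_succ m T).symm ▸ Nat.le_add_right _ _

/-- The Bonferroni inequalities, in both directions at once. -/
lemma abs_ite_sub_sum_choose_mul_choose_le (D i T : ℕ) :
    |(if D = i then (1 : ℝ) else 0) -
        ∑ t ∈ range T, (-1) ^ t * ((i + t).choose i : ℝ) * (D.choose (i + t) : ℝ)| ≤
      (i + T).choose i * D.choose (i + T) := by
  have hchoose (t : ℕ) : ((i + t).choose i : ℝ) * D.choose (i + t) =
      D.choose i * (D - i).choose t := by
    rw [mul_comm]
    exact_mod_cast Nat.add_sub_cancel_left (n := i) (m := t) ▸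
      Nat.choose_mul (n := D) (Nat.le_add_right i t)
  have hind : (if D = i then (1 : ℝ) else 0) = D.choose i * if D - i = 0 then 1 else 0 := by
    rcases lt_trichotomy D i with h | rfl | h
    · simp [h.ne, Nat.choose_eq_zero_of_lt h]
    · simp
    · simp [h.ne', Nat.sub_eq_zero_iff_le, h]
  simp only [mul_assoc, hchoose, mul_left_comm _ (D.choose i : ℝ)]
  rw [← mul_sum, hind, ← mul_sub, abs_mul, Nat.abs_cast]
  exact mul_le_mul_of_nonneg_left (abs_ite_sub_alternating_sum_choose_le _ _) (Nat.cast_nonneg _)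

lemma abs_subsetExp_ite_sub_sum_le {α : Type*} {p : ℝ} (hp : p ∈ Set.Icc 0 1) (S : Finset α)
    (X : Finset α → ℕ) (i T : ℕ) :
    |subsetExp p S (fun H ↦ if X H = i then 1 else 0) - ∑ t ∈ range T,
        (-1) ^ t * ((i + t).choose i : ℝ) * subsetExp p S fun H ↦ ((X H).choose (i + t) : ℝ)| ≤
      (i + T).choose i * subsetExp p S fun H ↦ ((X H).choose (i + T) : ℝ) := by
  simp only [← subsetExp_const_mul, ← subsetExp_sum, ← subsetExp_sub]
  exact (abs_subsetExp_le hp _).trans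
    (subsetExp_mono hp fun H ↦ abs_ite_sub_sum_choose_mul_choose_le (X H) i T)

lemma tendsto_of_eventually_abs_sub_le {β : Type*} {l : Filter β} {P : β → ℝ} {f g : ℕ → β → ℝ}
    {F G : ℕ → ℝ} {L : ℝ} (h : ∀ T, ∀ᶠ x in l, |P x - f T x| ≤ g T x)
    (hf : ∀ T, Tendsto (f T) l (𝓝 (F T))) (hg : ∀ T, Tendsto (g T) l (𝓝 (G T)))
    (hF : Tendsto F atTop (𝓝 L)) (hG : Tendsto G atTop (𝓝 0)) : Tendsto P l (𝓝 L) := by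
  refine Metric.tendsto_nhds.2 fun ε hε ↦ ?_
  have hlim : Tendsto (fun T ↦ G T + |F T - L|) atTop (𝓝 0) := by
    simpa using hG.add (hF.sub_const L).abs
  obtain ⟨T, hT⟩ := (hlim.eventually_lt_const hε).exists
  filter_upwards [h T, ((hg T).add ((hf T).sub_const L).abs).eventually_lt_const hT] with x hx hxε
  exact (abs_sub_le _ (f T x) L).trans_lt ((add_le_add_left hx _).trans_lt hxε)

lemma choose_mul_pow_div_factorial (lam : ℝ) (i t : ℕ) :
    (i + t).choose i * (lam ^ (i + t) / (i + t).factorial) =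
      lam ^ i / i.factorial * (lam ^ t / t.factorial) := by
  rw [Nat.cast_add_choose, pow_add]
  field_simp

lemma tendsto_sum_pow_div_factorial_poissonPMF (lam : ℝ) (i : ℕ) :
    Tendsto (fun T ↦ ∑ t ∈ range T,
        (-1) ^ t * ((i + t).choose i : ℝ) * (lam ^ (i + t) / (i + t).factorial))
      atTop (𝓝 (poissonPMF lam i)) := by
  have hexp := ((NormedSpace.expSeries_div_hasSum_exp (-lam)).mul_left
    (lam ^ i / i.factorial)).tendsto_sum_nat
  rw [← Real.exp_eq_exp_ℝ, ← mul_div_right_comm, mul_comm] at hexp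
  refine hexp.congr fun T ↦ sum_congr rfl fun t _ ↦ ?_
  rw [mul_assoc, choose_mul_pow_div_factorial, neg_pow]
  ring

lemma tendsto_choose_mul_pow_div_factorial_zero (lam : ℝ) (i : ℕ) :
    Tendsto (fun T ↦ (i + T).choose i * (lam ^ (i + T) / (i + T).factorial)) atTop (𝓝 0) := by
  simp only [choose_mul_pow_div_factorial]
  simpa using (FloorSemiring.tendsto_pow_div_factorial_atTop lam).const_mul (lam ^ i / i.factorial)

theorem tendsto_subsetExp_ite_poissonPMF {β : Type*} {l : Filter β} {α : β → Type*} {p : β → ℝ}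
    {S : ∀ b, Finset (α b)} {X : ∀ b, Finset (α b) → ℕ} {lam : ℝ}
    (hp : ∀ᶠ b in l, p b ∈ Set.Icc 0 1)
    (hX : ∀ r, Tendsto (fun b ↦ subsetExp (p b) (S b) fun H ↦ ((X b H).choose r : ℝ)) l
      (𝓝 (lam ^ r / r.factorial))) (i : ℕ) :
    Tendsto (fun b ↦ subsetExp (p b) (S b) fun H ↦ if X b H = i then 1 else 0) l
      (𝓝 (poissonPMF lam i)) :=
  tendsto_of_eventually_abs_sub_le
    (fun T ↦ hp.mono fun b hb ↦ abs_subsetExp_ite_sub_sum_le hb (S b) (X b) i T)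
    (fun _ ↦ tendsto_finsetSum _ fun t _ ↦ (hX (i + t)).const_mul _)
    (fun T ↦ (hX (i + T)).const_mul _)
    (tendsto_sum_pow_div_factorial_poissonPMF lam i)
    (tendsto_choose_mul_pow_div_factorial_zero lam i)

end FactorialMoments

section PoissonLimit

open Finset Topology

variable {β : Type*} {l : Filter β}

lemma tendsto_one_sub_pow_one {u : β → ℝ} {a : β → ℕ} (hu : ∀ᶠ b in l, u b ∈ Set.Icc 0 1)
    (hua : Tendsto (fun b ↦ u b * a b) l (𝓝 0)) :
    Tendsto (fun b ↦ (1 - u b) ^ a b) l (𝓝 1) := by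
  have hlower : Tendsto (fun b ↦ 1 - u b * a b) l (𝓝 1) := by simpa using hua.const_sub 1
  refine tendsto_of_tendsto_of_tendsto_of_le_of_le' hlower tendsto_const_nhds ?_ ?_
  · filter_upwards [hu] with b hb
    have := one_add_mul_le_pow (a := -u b) (by linarith [hb.2]) (a b)
    rw [← sub_eq_add_neg] at this
    linarith
  · filter_upwards [hu] with b hb
    exact pow_le_one₀ (sub_nonneg.2 hb.2) (sub_le_self 1 hb.1)

lemma tendsto_choose_mul_pow {m : β → ℕ} {q : β → ℝ} {lam : ℝ} (hm : Tendsto m l atTop)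
    (hmq : Tendsto (fun b ↦ m b * q b) l (𝓝 lam)) (r : ℕ) :
    Tendsto (fun b ↦ (m b).choose r * q b ^ r) l (𝓝 (lam ^ r / r.factorial)) := by
  have hequiv := ((isEquivalent_choose r).comp_tendsto hm).mul
    (IsEquivalent.refl (u := fun b ↦ q b ^ r))
  refine hequiv.symm.tendsto_nhds (((hmq.pow r).div_const (r.factorial : ℝ)).congr fun b ↦ ?_)
  simp only [Pi.mul_apply, Function.comp_apply]
  ring

lemma tendsto_choose_sub_div_choose_one {N L : β → ℕ} (hN : Tendsto N l atTop)
    (hLN : Tendsto (fun b ↦ (L b : ℝ) / N b) l (𝓝 0)) (s : ℕ) :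
    Tendsto (fun b ↦ ((N b - L b).choose s : ℝ) / (N b).choose s) l (𝓝 1) := by
  have hNpos : ∀ᶠ b in l, (0 : ℝ) < N b :=
    (hN.eventually_gt_atTop 0).mono fun b hb ↦ Nat.cast_pos.2 hb
  have hratio : Tendsto (fun b ↦ ((N b - L b : ℕ) : ℝ) / N b) l (𝓝 1) := by
    have hlower : Tendsto (fun b ↦ 1 - (L b : ℝ) / N b) l (𝓝 1) := by simpa using hLN.const_sub 1
    refine tendsto_of_tendsto_of_tendsto_of_le_of_le' hlower tendsto_const_nhds ?_ ?_
    · filter_upwards [hNpos] with b hb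
      rw [one_sub_div hb.ne']
      gcongr
      rw [sub_le_iff_le_add]
      exact_mod_cast Nat.sub_le_iff_le_add.1 le_rfl
    · exact .of_forall fun b ↦ div_le_one_of_le₀ (Nat.cast_le.2 (Nat.sub_le _ _)) (by positivity)
  have hNL : Tendsto (fun b ↦ N b - L b) l atTop := by
    rw [← tendsto_natCast_atTop_iff (R := ℝ)]
    refine (hratio.pos_mul_atTop one_pos (tendsto_natCast_atTop_atTop.comp hN)).congr' ?_
    filter_upwards [hNpos] with b hb
    exact div_mul_cancel₀ _ hb.ne'
  have hequiv := ((isEquivalent_choose s).comp_tendsto hNL).div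
    ((isEquivalent_choose s).comp_tendsto hN)
  have hpow := hratio.pow s
  rw [one_pow] at hpow
  refine hequiv.symm.tendsto_nhds (hpow.congr fun b ↦ ?_)
  simp only [Pi.div_apply, Function.comp_apply]
  rw [div_div_div_cancel_right₀ (by positivity), div_pow]

variable {α ι : β → Type*} [∀ b, DecidableEq (α b)] {p : β → ℝ} {S : ∀ b, Finset (α b)}
  {A : ∀ b, Finset (ι b)} {E : ∀ b, ι b → Finset (α b)} {N M : β → ℕ} {s : ℕ} {lam : ℝ}

lemma tendsto_subsetExp_choose_numMeeting
    (hE : ∀ᶠ b in l, IsNearlyDisjointFamily (S b) (A b) (E b) (N b) (M b))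
    (hp : ∀ᶠ b in l, p b ∈ Set.Ico 0 1) (hpN : Tendsto (fun b ↦ p b * N b) l atTop)
    (hpM : Tendsto (fun b ↦ p b * M b) l (𝓝 0)) (hA : Tendsto (fun b ↦ #(A b)) l atTop)
    (hlam : Tendsto (fun b ↦ #(A b) * binomialPMF (N b) (p b) s) l (𝓝 lam)) (r : ℕ) :
    Tendsto (fun b ↦ subsetExp (p b) (S b) fun H ↦ ((numMeeting (A b) (E b) s H).choose r : ℝ)) l
      (𝓝 (lam ^ r / r.factorial)) := by
  have hp' : ∀ᶠ b in l, p b ∈ Set.Icc 0 1 := hp.mono fun b hb ↦ Set.Ico_subset_Icc_self hb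
  have hN : Tendsto N l atTop := by
    rw [← tendsto_natCast_atTop_iff (R := ℝ)]
    exact tendsto_atTop_mono' l (hp'.mono fun b hb ↦
      mul_le_of_le_one_left (Nat.cast_nonneg _) hb.2) hpN
  have hpL : Tendsto (fun b ↦ p b * (r ^ 2 * M b : ℕ)) l (𝓝 0) := by
    simpa [mul_left_comm] using hpM.const_mul ((r : ℝ) ^ 2)
  have hLN : Tendsto (fun b ↦ ((r ^ 2 * M b : ℕ) : ℝ) / N b) l (𝓝 0) := by
    refine (hpL.div_atTop hpN).congr' ?_
    filter_upwards [hpN.eventually_gt_atTop 0] with b hb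
    exact mul_div_mul_left _ _ (left_ne_zero_of_mul hb.ne')
  have hpow := tendsto_one_sub_pow_one hp' hpL
  have hlower := hpow.mul (tendsto_choose_mul_pow hA
    (by simpa [mul_left_comm] using (tendsto_choose_sub_div_choose_one hN hLN s).mul hlam) r)
  have hupper := tendsto_choose_mul_pow hA
    ((hlam.div hpow one_ne_zero).congr fun b ↦ mul_div_assoc _ _ _) r
  rw [one_mul] at hlower
  rw [div_one] at hupper
  refine tendsto_of_tendsto_of_tendsto_of_le_of_le' hlower hupper ?_ ?_
  · filter_upwards [hE, hp'] with b hEb hb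
    exact (mul_left_comm _ _ _).trans_le (hEb.le_subsetExp_choose hb s r)
  · have hgap : Tendsto (fun b ↦ p b * (N b - r ^ 2 * M b)) l atTop := by
      simpa [mul_add, sub_eq_add_neg] using hpN.atTop_add hpL.neg
    filter_upwards [hE, hp, hgap.eventually_ge_atTop (s : ℝ)] with b hEb hb hs
    exact hEb.subsetExp_choose_le hb hs

theorem tendsto_subsetExp_numMeeting_eq
    (hE : ∀ᶠ b in l, IsNearlyDisjointFamily (S b) (A b) (E b) (N b) (M b))
    (hp : ∀ᶠ b in l, p b ∈ Set.Ico 0 1) (hpN : Tendsto (fun b ↦ p b * N b) l atTop)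
    (hpM : Tendsto (fun b ↦ p b * M b) l (𝓝 0)) (hA : Tendsto (fun b ↦ #(A b)) l atTop)
    (hlam : Tendsto (fun b ↦ #(A b) * binomialPMF (N b) (p b) s) l (𝓝 lam)) (i : ℕ) :
    Tendsto (fun b ↦ subsetExp (p b) (S b) fun H ↦ if numMeeting (A b) (E b) s H = i then 1 else 0)
      l (𝓝 (poissonPMF lam i)) :=
  tendsto_subsetExp_ite_poissonPMF (hp.mono fun _ hb ↦ Set.Ico_subset_Icc_self hb)
    (tendsto_subsetExp_choose_numMeeting hE hp hpN hpM hA hlam) i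

end PoissonLimit

section Hypergraph

open Finset

variable {n k j : ℕ}

/-- The potential edges containing the vertex set `J`. -/
def edgesContaining (k : ℕ) (J : Finset (Fin n)) : Finset (Finset (Fin n)) :=
  {e ∈ kSets n k | J ⊆ e}

lemma card_edgesContaining {J : Finset (Fin n)} (hJ : #J ≤ k) :
    #(edgesContaining k J) = (n - #J).choose (k - #J) := by
  rw [edgesContaining, kSets, card_filter_powersetCard_subset J univ k (subset_univ J) hJ,
    card_univ, Fintype.card_fin]

lemma card_edgesContaining_inter_le (hjk : j < k) {J J' : Finset (Fin n)} (hJ : #J = j)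
    (hJ' : #J' = j) (hne : J ≠ J') :
    #(edgesContaining k J ∩ edgesContaining k J') ≤ (n - (j + 1)).choose (k - (j + 1)) := by
  obtain ⟨v, hvJ', hvJ⟩ := not_subset.1 fun h ↦ hne (eq_of_subset_of_card_le h (by omega)).symm
  have hcard : #(insert v J) = j + 1 := by rw [card_insert_of_notMem hvJ, hJ]
  rw [← hcard, ← card_edgesContaining (hcard.trans_le hjk)]
  refine card_le_card fun e he ↦ ?_
  simp only [edgesContaining, mem_inter, mem_filter] at he ⊢
  exact ⟨he.1.1, insert_subset (he.2.2 hvJ') he.1.2⟩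

lemma isNearlyDisjointFamily_edgesContaining (n : ℕ) (hjk : j < k) :
    IsNearlyDisjointFamily (kSets n k) (powersetCard j univ) (edgesContaining k)
      ((n - j).choose (k - j)) ((n - (j + 1)).choose (k - (j + 1))) where
  subset _ _ := filter_subset _ _
  card_eq J hJ := by
    obtain rfl := (mem_powersetCard.1 hJ).2
    exact card_edgesContaining hjk.le
  card_inter_le _ hJ _ hJ' hne :=
    card_edgesContaining_inter_le hjk (mem_powersetCard.1 hJ).2 (mem_powersetCard.1 hJ').2 hne

lemma numMeeting_edgesContaining (j s : ℕ) {H : Finset (Finset (Fin n))} (hH : H ⊆ kSets n k) :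
    numMeeting (powersetCard j univ) (edgesContaining k) s H = numDegSets n j s H := by
  have hdeg (J : Finset (Fin n)) : #(H ∩ edgesContaining k J) = setDegree H J := by
    rw [edgesContaining, inter_filter, inter_eq_left.2 hH, setDegree]
  simp only [numMeeting, numDegSets, hdeg]

lemma binomProb_numDegSets_eq_subsetExp (n k j s : ℕ) (p : ℝ) (i : ℕ) :
    binomProb n k p (fun H ↦ numDegSets n j s H = i) = subsetExp p (kSets n k) fun H ↦
      if numMeeting (powersetCard j univ) (edgesContaining k) s H = i then 1 else 0 := by
  refine sum_congr rfl fun H hH ↦ ?_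
  simp only [numMeeting_edgesContaining j s (mem_powerset.1 hH)]
  split_ifs <;> simp

end Hypergraph

section PoissonApproximation

open Topology

variable {β : Type*} {l : Filter β} {N : β → ℕ} {p : β → ℝ}

lemma tendsto_one_sub_pow_mul_exp (hp : ∀ᶠ b in l, p b ∈ Set.Icc 0 1)
    (hpN : Tendsto (fun b ↦ p b ^ 2 * N b) l (𝓝 0)) :
    Tendsto (fun b ↦ (1 - p b) ^ N b * Real.exp (p b * N b)) l (𝓝 1) := by
  have hexp (b : β) : Real.exp (p b * N b) = Real.exp (p b) ^ N b := by
    rw [mul_comm, Real.exp_nat_mul]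
  have hlower : Tendsto (fun b ↦ (1 - p b ^ 2) ^ N b) l (𝓝 1) :=
    tendsto_one_sub_pow_one
      (hp.mono fun b hb ↦ ⟨sq_nonneg _, pow_le_one₀ hb.1 hb.2⟩) hpN
  refine tendsto_of_tendsto_of_tendsto_of_le_of_le' hlower tendsto_const_nhds ?_ ?_
  · filter_upwards [hp] with b hb
    have hq : 0 ≤ 1 - p b := sub_nonneg.2 hb.2
    rw [hexp, ← mul_pow, show 1 - p b ^ 2 = (1 - p b) * (p b + 1) by ring]
    have := hb.1
    gcongr
    exact Real.add_one_le_exp _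
  · filter_upwards [hp] with b hb
    have hq : 0 ≤ 1 - p b := sub_nonneg.2 hb.2
    rw [hexp, ← mul_pow]
    refine pow_le_one₀ (by positivity) ?_
    calc (1 - p b) * Real.exp (p b) ≤ Real.exp (-p b) * Real.exp (p b) := by
          gcongr
          exact Real.one_sub_le_exp_neg _
      _ = 1 := by rw [← Real.exp_add, neg_add_cancel, Real.exp_zero]

lemma isEquivalent_binomialPMF (hp : ∀ᶠ b in l, p b ∈ Set.Icc 0 1) (hp0 : Tendsto p l (𝓝 0))
    (hN : Tendsto N l atTop) (hpN : Tendsto (fun b ↦ p b ^ 2 * N b) l (𝓝 0)) (s : ℕ) :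
    (fun b ↦ binomialPMF (N b) (p b) s) ~[l]
      fun b ↦ (p b * N b) ^ s / s.factorial * Real.exp (-(p b * N b)) := by
  have hpow : Tendsto (fun b ↦ (1 - p b) ^ N b * Real.exp (p b * N b) / (1 - p b) ^ s) l
      (𝓝 1) := by
    simpa [Pi.div_def] using
      (tendsto_one_sub_pow_mul_exp hp hpN).div ((hp0.const_sub 1).pow s) (by simp)
  have hexp : (fun b ↦ (1 - p b) ^ (N b - s)) ~[l] fun b ↦ Real.exp (-(p b * N b)) := by
    refine (isEquivalent_iff_tendsto_one (.of_forall fun b ↦ (Real.exp_pos _).ne')).2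
      (hpow.congr' ?_)
    filter_upwards [hN.eventually_ge_atTop s, hp0.eventually_lt_const one_pos] with b hs hb
    rw [Pi.div_apply, Real.exp_neg, div_inv_eq_mul, pow_sub₀ _ (sub_pos.2 hb).ne' hs]
    ring
  refine ((((isEquivalent_choose s).comp_tendsto hN).mul
    (IsEquivalent.refl (u := fun b ↦ p b ^ s))).mul hexp).congr_right (.of_forall fun b ↦ ?_)
  simp only [Pi.mul_apply, Function.comp_apply]
  ring

end PoissonApproximation

section MeanDegree

open Topology

lemma tendsto_choose_atTop {j : ℕ} (hj : j ≠ 0) : Tendsto (fun n : ℕ ↦ n.choose j) atTop atTop := by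
  rw [← tendsto_natCast_atTop_iff (R := ℝ)]
  exact (isEquivalent_choose j).symm.tendsto_atTop
    (((tendsto_pow_atTop hj).comp tendsto_natCast_atTop_atTop).atTop_div_const (by positivity))

lemma tendsto_log_natCast_atTop : Tendsto (fun n : ℕ ↦ Real.log n) atTop atTop :=
  Real.tendsto_log_atTop.comp tendsto_natCast_atTop_atTop

variable {x : ℕ → ℝ} {a c : ℝ}

lemma tendsto_div_log (b : ℝ)
    (hx : Tendsto (fun n : ℕ ↦ x n - (a * Real.log n + b * Real.log (Real.log n))) atTop (𝓝 c)) :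
    Tendsto (fun n ↦ x n / Real.log n) atTop (𝓝 a) := by
  have hloglog : Tendsto (fun n : ℕ ↦ Real.log (Real.log n) / Real.log n) atTop (𝓝 0) :=
    Real.isLittleO_log_id_atTop.tendsto_div_nhds_zero.comp tendsto_log_natCast_atTop
  have hsum := ((hloglog.const_mul b).const_add a).add (hx.div_atTop tendsto_log_natCast_atTop)
  rw [mul_zero, add_zero, add_zero] at hsum
  refine hsum.congr' ?_
  filter_upwards [tendsto_log_natCast_atTop.eventually_gt_atTop 0] with n hn
  field_simp
  ring

lemma tendsto_atTop_of_div_log (ha : 0 < a)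
    (hx : Tendsto (fun n ↦ x n / Real.log n) atTop (𝓝 a)) : Tendsto x atTop atTop := by
  refine (hx.pos_mul_atTop ha tendsto_log_natCast_atTop).congr' ?_
  filter_upwards [tendsto_log_natCast_atTop.eventually_gt_atTop 0] with n hn
  exact div_mul_cancel₀ _ hn.ne'

lemma tendsto_pow_div_natCast_zero (hx : Tendsto (fun n ↦ x n / Real.log n) atTop (𝓝 a)) (r : ℕ) :
    Tendsto (fun n ↦ x n ^ r / n) atTop (𝓝 0) := by
  have hlog : Tendsto (fun n : ℕ ↦ Real.log n ^ r / n) atTop (𝓝 0) :=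
    Real.isLittleO_pow_log_id_atTop.tendsto_div_nhds_zero.comp tendsto_natCast_atTop_atTop
  have hmul := (hx.pow r).mul hlog
  rw [mul_zero] at hmul
  refine hmul.congr' ?_
  filter_upwards [tendsto_log_natCast_atTop.eventually_gt_atTop 0] with n hn
  rw [div_pow]
  field_simp

lemma tendsto_pow_mul_pow_mul_exp_neg {j s : ℕ}
    (hx : Tendsto (fun n : ℕ ↦ x n - (j * Real.log n + s * Real.log (Real.log n))) atTop (𝓝 c)) :
    Tendsto (fun n ↦ n ^ j * (x n ^ s * Real.exp (-x n))) atTop (𝓝 (j ^ s * Real.exp (-c))) := by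
  refine (((tendsto_div_log _ hx).pow s).mul (hx.neg.rexp)).congr' ?_
  filter_upwards [eventually_gt_atTop 0, tendsto_log_natCast_atTop.eventually_gt_atTop 0]
    with n hn hlog
  have hn' : (0 : ℝ) < n := Nat.cast_pos.2 hn
  rw [neg_sub, sub_eq_add_neg, Real.exp_add, Real.exp_add, Real.exp_nat_mul, Real.exp_nat_mul,
    Real.exp_log hn', Real.exp_log hlog, div_pow]
  field_simp

variable {p : ℕ → ℝ} {n j s d : ℕ}

lemma choose_le_choose_sub_add (n j d : ℕ) :
    n.choose (d + 1) ≤ (n - j).choose (d + 1) + j * (n - 1).choose d := by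
  induction j with
  | zero => simp
  | succ j ih =>
    have hstep : (n - j).choose (d + 1) ≤ (n - (j + 1)).choose (d + 1) + (n - 1).choose d := by
      rcases Nat.eq_zero_or_pos (n - j) with h | h
      · simp [h]
      · obtain ⟨m, hm⟩ := Nat.exists_eq_add_of_lt h
        have := Nat.choose_le_choose d (show m ≤ n - 1 by omega)
        rw [show n - (j + 1) = m by omega, show n - j = m + 1 by omega, Nat.choose_succ_succ']
        omega
    linarith

lemma natCast_mul_choose_pred (n d : ℕ) :
    (n * (n - 1).choose d : ℝ) = (d + 1) * n.choose (d + 1) := by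
  rcases n with _ | n
  · simp
  · rw [mul_comm (d + 1 : ℝ)]
    exact_mod_cast Nat.add_one_mul_choose_eq n d

lemma natCast_mul_choose_le (h : 2 * j ≤ n) (d : ℕ) :
    (n * (n - (j + 1)).choose d : ℝ) ≤ 2 * ((d + 1) * (n - j).choose (d + 1)) := by
  have hn : (n : ℝ) ≤ 2 * (n - j : ℕ) := by exact_mod_cast (by omega : n ≤ 2 * (n - j))
  rw [← natCast_mul_choose_pred, ← mul_assoc, Nat.sub_sub]
  gcongr

lemma tendsto_mul_choose_sub_sub_zero
    (hp : Tendsto (fun n ↦ p n * n.choose (d + 1) / Real.log n) atTop (𝓝 a)) (ha : 0 < a) (j : ℕ) :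
    Tendsto (fun n ↦ p n * (n - j).choose (d + 1) - p n * n.choose (d + 1)) atTop (𝓝 0) := by
  have hlower : Tendsto (fun n ↦ -(j * ((d + 1) * ((p n * n.choose (d + 1)) ^ 1 / n)))) atTop
      (𝓝 0) := by
    simpa using (((tendsto_pow_div_natCast_zero hp 1).const_mul (d + 1 : ℝ)).const_mul (j : ℝ)).neg
  have hpos : ∀ᶠ n in atTop, 0 < p n :=
    ((tendsto_atTop_of_div_log ha hp).eventually_gt_atTop 0).mono fun n hn ↦
      pos_of_mul_pos_left hn (Nat.cast_nonneg _)
  refine tendsto_of_tendsto_of_tendsto_of_le_of_le' hlower tendsto_const_nhds ?_ ?_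
  · filter_upwards [hpos, eventually_gt_atTop 0] with n hpn hn
    have hle : (n.choose (d + 1) : ℝ) ≤ (n - j).choose (d + 1) + j * (n - 1).choose d := by
      exact_mod_cast choose_le_choose_sub_add n j d
    have hn' : (0 : ℝ) < n := Nat.cast_pos.2 hn
    calc -(j * ((d + 1) * ((p n * n.choose (d + 1)) ^ 1 / n)))
        = p n * -(j * ((d + 1) * n.choose (d + 1) / n)) := by ring
      _ = p n * -(j * (n - 1).choose d) := by
        rw [← natCast_mul_choose_pred, mul_div_cancel_left₀ _ hn'.ne']
      _ ≤ p n * ((n - j).choose (d + 1) - n.choose (d + 1)) := by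
        gcongr
        linarith
      _ = _ := mul_sub _ _ _
  · filter_upwards [hpos] with n hpn
    rw [← mul_sub]
    exact mul_nonpos_of_nonneg_of_nonpos hpn.le
      (sub_nonpos.2 (Nat.cast_le.2 (Nat.choose_le_choose _ (Nat.sub_le n j))))

/-- The true number of potential edges containing a `j`-set is `C(n - j, d + 1)`, where
`d + 1 = k - j`. -/
lemma tendsto_mul_choose_sub (ha : 0 < a) (b : ℝ)
    (hp : Tendsto (fun n : ℕ ↦ p n * n.choose (d + 1) -
      (a * Real.log n + b * Real.log (Real.log n))) atTop (𝓝 c)) (j : ℕ) :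
    Tendsto (fun n : ℕ ↦ p n * (n - j).choose (d + 1) -
      (a * Real.log n + b * Real.log (Real.log n))) atTop (𝓝 c) := by
  simpa using (tendsto_mul_choose_sub_sub_zero (tendsto_div_log b hp) ha j).add hp

lemma tendsto_mul_codegree_mul_pow_zero
    (hx : Tendsto (fun n ↦ p n * (n - j).choose (d + 1) / Real.log n) atTop (𝓝 a)) (ha : 0 < a)
    (r : ℕ) :
    Tendsto (fun n ↦ p n * (n - (j + 1)).choose d * (p n * (n - j).choose (d + 1)) ^ r) atTop
      (𝓝 0) := by
  have hupper := (tendsto_pow_div_natCast_zero hx (r + 1)).const_mul (2 * (d + 1 : ℝ))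
  rw [mul_zero] at hupper
  have hpos := (tendsto_atTop_of_div_log ha hx).eventually_gt_atTop 0
  refine tendsto_of_tendsto_of_tendsto_of_le_of_le' tendsto_const_nhds hupper ?_ ?_
  · filter_upwards [hpos] with n hn
    have : 0 < p n := pos_of_mul_pos_left hn (Nat.cast_nonneg _)
    positivity
  · filter_upwards [hpos, eventually_ge_atTop (2 * j), eventually_gt_atTop 0] with n hn hjn hn0
    have hp : 0 < p n := pos_of_mul_pos_left hn (Nat.cast_nonneg _)
    rw [← mul_div_assoc, le_div_iff₀ (Nat.cast_pos.2 hn0)]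
    calc p n * (n - (j + 1)).choose d * (p n * (n - j).choose (d + 1)) ^ r * n
        = p n * (n * (n - (j + 1)).choose d) * (p n * (n - j).choose (d + 1)) ^ r := by ring
      _ ≤ p n * (2 * ((d + 1) * (n - j).choose (d + 1))) * (p n * (n - j).choose (d + 1)) ^ r := by
        refine mul_le_mul_of_nonneg_right ?_ (by positivity)
        exact mul_le_mul_of_nonneg_left (natCast_mul_choose_le hjn d) hp.le
      _ = _ := by ring

lemma tendsto_mul_pow_zero
    (hx : Tendsto (fun n ↦ p n * (n - j).choose (d + 1) / Real.log n) atTop (𝓝 a)) (ha : 0 < a)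
    (r : ℕ) : Tendsto (fun n ↦ p n * (p n * (n - j).choose (d + 1)) ^ r) atTop (𝓝 0) := by
  have hpos := (tendsto_atTop_of_div_log ha hx).eventually_gt_atTop 0
  refine tendsto_of_tendsto_of_tendsto_of_le_of_le' tendsto_const_nhds
    (tendsto_mul_codegree_mul_pow_zero hx ha r) ?_ ?_
  all_goals
    filter_upwards [hpos, eventually_ge_atTop (j + 1 + d)] with n hn hnd
    have hp : 0 < p n := pos_of_mul_pos_left hn (Nat.cast_nonneg _)
  · positivity
  · have hM : (1 : ℝ) ≤ (n - (j + 1)).choose d := by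
      exact_mod_cast Nat.choose_pos (by omega : d ≤ n - (j + 1))
    gcongr
    exact le_mul_of_one_le_right hp.le hM

lemma eventually_mem_Ico
    (hx : Tendsto (fun n ↦ p n * (n - j).choose (d + 1) / Real.log n) atTop (𝓝 a)) (ha : 0 < a) :
    ∀ᶠ n in atTop, p n ∈ Set.Ico 0 1 := by
  have hp0 : Tendsto p atTop (𝓝 0) := by simpa using tendsto_mul_pow_zero hx ha 0
  filter_upwards [(tendsto_atTop_of_div_log ha hx).eventually_gt_atTop 0,
    hp0.eventually_lt_const one_pos] with n hn hlt
  exact ⟨(pos_of_mul_pos_left hn (Nat.cast_nonneg _)).le, hlt⟩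

lemma tendsto_choose_mul_binomialPMF (hj : j ≠ 0)
    (hx : Tendsto (fun n : ℕ ↦ p n * (n - j).choose (d + 1) -
      (j * Real.log n + s * Real.log (Real.log n))) atTop (𝓝 c)) :
    Tendsto (fun n ↦ n.choose j * binomialPMF ((n - j).choose (d + 1)) (p n) s) atTop
      (𝓝 (j ^ s * Real.exp (-c) / (j.factorial * s.factorial))) := by
  have hj' : (0 : ℝ) < j := by positivity
  have hlog := tendsto_div_log _ hx
  have hbinom := isEquivalent_binomialPMF
    ((eventually_mem_Ico hlog hj').mono fun _ hn ↦ Set.Ico_subset_Icc_self hn)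
    (by simpa using tendsto_mul_pow_zero hlog hj' 0)
    ((tendsto_choose_atTop d.succ_ne_zero).comp (tendsto_sub_atTop_nat j))
    (by simpa [sq, mul_assoc] using tendsto_mul_pow_zero hlog hj' 1) s
  refine ((isEquivalent_choose j).mul hbinom).symm.tendsto_nhds
    (((tendsto_pow_mul_pow_mul_exp_neg hx).div_const _).congr fun n ↦ ?_)
  simp only [Pi.mul_apply, Function.comp_apply]
  field_simp

end MeanDegree

section Main

open Topology

theorem tendsto_binomProb_numDegSets {k j s : ℕ} (hj : 1 ≤ j) (hjk : j < k) {p : ℕ → ℝ} {c : ℝ}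
    (hmean : Tendsto (fun n : ℕ ↦ p n * (n - j).choose (k - j) -
      (j * Real.log n + s * Real.log (Real.log n))) atTop (𝓝 c)) (i : ℕ) :
    Tendsto (fun n ↦ binomProb n k (p n) fun H ↦ numDegSets n j s H = i) atTop
      (𝓝 (poissonPMF (j ^ s * Real.exp (-c) / (j.factorial * s.factorial)) i)) := by
  obtain ⟨d, rfl⟩ : ∃ d, k = j + 1 + d := Nat.exists_eq_add_of_le hjk
  have hfam (n : ℕ) := isNearlyDisjointFamily_edgesContaining n hjk
  rw [show j + 1 + d - j = d + 1 by omega] at hmean hfam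
  rw [Nat.add_sub_cancel_left] at hfam
  have hj0 : j ≠ 0 := Nat.one_le_iff_ne_zero.1 hj
  have hjpos : (0 : ℝ) < j := Nat.cast_pos.2 hj
  have hlog := tendsto_div_log _ hmean
  simp only [binomProb_numDegSets_eq_subsetExp]
  refine tendsto_subsetExp_numMeeting_eq (.of_forall hfam) (eventually_mem_Ico hlog hjpos)
    (tendsto_atTop_of_div_log hjpos hlog)
    (by simpa using tendsto_mul_codegree_mul_pow_zero hlog hjpos 0) ?_ ?_ i
  · simpa using tendsto_choose_atTop hj0
  · simpa using tendsto_choose_mul_binomialPMF hj0 hmean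

theorem poisson_convergence_general (k j s : ℕ) (hj : 1 ≤ j) (hjk : j < k) (p c : ℕ → ℝ) (c0 : ℝ)
    (hc : Tendsto c atTop (𝓝 c0))
    (hp : ∀ n : ℕ, p n =
      (j * Real.log n + s * Real.log (Real.log n) + c n) / n.choose (k - j)) (i : ℕ) :
    Tendsto (fun n ↦ binomProb n k (p n) fun H ↦ numDegSets n j s H = i) atTop
      (𝓝 (poissonPMF (j ^ s * Real.exp (-c0) / (j.factorial * s.factorial)) i)) := by
  have hlimit : Tendsto (fun n : ℕ ↦ p n * n.choose (k - j) -
      (j * Real.log n + s * Real.log (Real.log n))) atTop (𝓝 c0) := by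
    refine hc.congr' ((eventually_ge_atTop (k - j)).mono fun n hn ↦ ?_)
    have : (n.choose (k - j) : ℝ) ≠ 0 := Nat.cast_ne_zero.2 (Nat.choose_pos hn).ne'
    simp only [hp, div_mul_cancel₀ _ this, add_sub_cancel_left]
  refine tendsto_binomProb_numDegSets hj hjk ?_ i
  obtain ⟨d, hd⟩ : ∃ d, k - j = d + 1 := Nat.exists_eq_add_one.2 (Nat.sub_pos_of_lt hjk)
  rw [hd] at hlimit ⊢
  exact tendsto_mul_choose_sub (Nat.cast_pos.2 hj) s hlimit j

end Main

/-- **Theorem 2(ii).** For `k ≥ 3`, `1 ≤ j ≤ k-1`, a fixed integer `s ≥ 0`, and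
`p = (j log n + s log log n + c_n)/C(n,k-j)` with `c_n → c`, the number `D_s` of `j`-sets of
degree exactly `s` in `H^k(n,p)` converges in distribution to `Po(j^s e^{-c}/(j! s!))`. -/
theorem poisson_convergence (k j s : ℕ) (hk : 3 ≤ k) (hj : 1 ≤ j) (hjk : j ≤ k - 1)
    (p c : ℕ → ℝ) (c0 : ℝ)
    (hc : Tendsto c atTop (nhds c0))
    (hp : ∀ n : ℕ, p n =
      ((j : ℝ) * Real.log n + (s : ℝ) * Real.log (Real.log n) + c n) /
        (n.choose (k - j) : ℝ)) :
    ∀ i : ℕ,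
      Tendsto (fun n : ℕ => binomProb n k (p n) (fun H => numDegSets n j s H = i)) atTop
        (nhds (poissonPMF ((j : ℝ) ^ s * Real.exp (-c0) /
          ((Nat.factorial j : ℝ) * (Nat.factorial s : ℝ))) i)) := by
  exact poisson_convergence_general k j s hj (by omega) p c c0 hc hp

end
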